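/- Define the sequence (c_k)_{k≥1} by c_1 = 0 and c_{k+1} = e^{c_k − 1}. Then for every integer k ≥ 1 and every real x ≥ 0, F_k(x) ≥ 1 − e^{(c_k − 1)x}. -/

import Mathlib

/-!
The inequality on `F` reduces to the single-tree inequality `1 - f k z ≤ exp ((c_k - 1) z)` for
`z ∈ (0, 1]`: multiplying it over the parts of a decomposition of `x` turns the exponentials into
`exp ((c_k - 1) x)`, which therefore bounds the supremum in `F k x`.

The single-tree inequality is proved by induction on `k` (`f_bounds`), starting from
`1 - z ≤ exp (-z)`. In the step, the ratios `zᵢ / z` lie in `(0, 1]` and sum to `1`, so the same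
product estimate shows that the infimum in `f (k + 1) z` is at least
`1 - exp (c_k - 1) = 1 - c_{k+1}`. Hence
`1 - f (k + 1) z ≤ 1 - (1 - c_{k+1}) z ≤ exp ((c_{k+1} - 1) z)`. The induction also carries
`0 ≤ f k z ≤ 1`, which is needed to multiply the inequalities.
-/

open scoped BigOperators

/-- `f k z` lower-bounds the probability that the randomized tree-rounding procedure on a
`k`-level tree opens at least one root-to-leaf path when a client sends flow `z` to that
tree: `f 1 z = z`, and for `k ≥ 2` and `z ≠ 0`,
`f k z = z · inf { 1 - ∏ (1 - f (k-1) (zᵢ/z)) : n ≥ 1, zᵢ > 0, ∑ zᵢ = z }`. -/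
noncomputable def f : ℕ → ℝ → ℝ
  | 0, _ => 0
  | 1, z => z
  | (k + 2), z =>
      if z = 0 then 0
      else z * sInf { t : ℝ | ∃ (n : ℕ) (zs : Fin n → ℝ), 0 < n ∧ (∀ i, 0 < zs i) ∧
            (∑ i, zs i) = z ∧ t = 1 - ∏ i, (1 - f (k + 1) (zs i / z)) }

/-- `F k x` lower-bounds the probability that at least one path opens when a client sends
total flow `x`, split among several `k`-level trees:
`F k x = 1 - sup { ∏ (1 - f k xᵢ) : n ≥ 1, xᵢ ∈ (0,1], ∑ xᵢ = x }`, with `F k 0 = 0`. -/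
noncomputable def F (k : ℕ) (x : ℝ) : ℝ :=
  if x = 0 then 0
  else 1 - sSup { t : ℝ | ∃ (n : ℕ) (xs : Fin n → ℝ), 0 < n ∧
        (∀ i, xs i ∈ Set.Ioc (0 : ℝ) 1) ∧ (∑ i, xs i) = x ∧
        t = ∏ i, (1 - f k (xs i)) }

/-- The sequence `c₁ = 0`, `c_{k+1} = e^{c_k - 1}` (index `0` is junk). -/
noncomputable def cseq : ℕ → ℝ
  | 0 => 0
  | 1 => 0
  | (k + 2) => Real.exp (cseq (k + 1) - 1)

/-- A pointwise bound `1 - g z ≤ exp (a z)` on `(0, 1]` multiplies to a bound depending only on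
the total of the parts. -/
theorem prod_one_sub_le_exp {g : ℝ → ℝ} {a : ℝ}
    (hg : ∀ z ∈ Set.Ioc (0 : ℝ) 1, g z ≤ 1 ∧ 1 - g z ≤ Real.exp (a * z))
    {n : ℕ} (xs : Fin n → ℝ) (hxs : ∀ i, xs i ∈ Set.Ioc (0 : ℝ) 1) :
    ∏ i, (1 - g (xs i)) ≤ Real.exp (a * ∑ i, xs i) := by
  rw [Finset.mul_sum, Real.exp_sum]
  exact Finset.prod_le_prod (fun i _ => sub_nonneg.2 (hg _ (hxs i)).1)
    (fun i _ => (hg _ (hxs i)).2)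

theorem div_mem_Ioc_of_sum_eq {n : ℕ} {zs : Fin n → ℝ} {z : ℝ} (hz : 0 < z)
    (hpos : ∀ i, 0 < zs i) (hsum : ∑ i, zs i = z) (i : Fin n) :
    zs i / z ∈ Set.Ioc (0 : ℝ) 1 := by
  refine ⟨div_pos (hpos i) hz, (div_le_one hz).2 ?_⟩
  rw [← hsum]
  exact Finset.single_le_sum (fun j _ => (hpos j).le) (Finset.mem_univ i)

/-- The single-tree estimate, with the range `[0, 1]` of `f` carried along the induction. -/
theorem f_bounds (k : ℕ) : ∀ z ∈ Set.Ioc (0 : ℝ) 1,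
    0 ≤ f (k + 1) z ∧ f (k + 1) z ≤ 1 ∧
      1 - f (k + 1) z ≤ Real.exp ((cseq (k + 1) - 1) * z) := by
  induction k with
  | zero =>
    rintro z ⟨hz0, hz1⟩
    simp only [f, cseq]
    refine ⟨hz0.le, hz1, ?_⟩
    have := Real.add_one_le_exp ((0 - 1) * z)
    linarith
  | succ k ih =>
    rintro z ⟨hz0, hz1⟩
    have hf : f (k + 1 + 1) z = z * sInf { t : ℝ | ∃ (n : ℕ) (zs : Fin n → ℝ), 0 < n ∧
        (∀ i, 0 < zs i) ∧ (∑ i, zs i) = z ∧ t = 1 - ∏ i, (1 - f (k + 1) (zs i / z)) } := by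
      simp only [f, if_neg hz0.ne']
    have hc : cseq (k + 1 + 1) = Real.exp (cseq (k + 1) - 1) := rfl
    rw [hf, hc]
    set S := { t : ℝ | ∃ (n : ℕ) (zs : Fin n → ℝ), 0 < n ∧
        (∀ i, 0 < zs i) ∧ (∑ i, zs i) = z ∧ t = 1 - ∏ i, (1 - f (k + 1) (zs i / z)) }
    -- The decomposition of `z` into the single part `z`.
    have hmem : f (k + 1) 1 ∈ S :=
      ⟨1, fun _ => z, one_pos, fun _ => hz0, by simp, by simp [div_self hz0.ne']⟩
    have hS0 : ∀ t ∈ S, 0 ≤ t := by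
      rintro t ⟨n, zs, -, hpos, hsum, rfl⟩
      have hr := div_mem_Ioc_of_sum_eq hz0 hpos hsum
      exact sub_nonneg.2 (Finset.prod_le_one (fun i _ => sub_nonneg.2 (ih _ (hr i)).2.1)
        (fun i _ => sub_le_self _ (ih _ (hr i)).1))
    have hSc : ∀ t ∈ S, 1 - Real.exp (cseq (k + 1) - 1) ≤ t := by
      rintro t ⟨n, zs, -, hpos, hsum, rfl⟩
      have h := prod_one_sub_le_exp (fun w hw => (ih w hw).2) (fun i => zs i / z)
        (div_mem_Ioc_of_sum_eq hz0 hpos hsum)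
      rw [← Finset.sum_div, hsum, div_self hz0.ne', mul_one] at h
      linarith
    have h0 : 0 ≤ sInf S := Real.sInf_nonneg hS0
    have h1 : sInf S ≤ 1 := (csInf_le ⟨0, hS0⟩ hmem).trans (ih 1 (by simp)).2.1
    have h2 : 1 - Real.exp (cseq (k + 1) - 1) ≤ sInf S := le_csInf ⟨_, hmem⟩ hSc
    refine ⟨mul_nonneg hz0.le h0, mul_le_one₀ hz1 h0 h1, ?_⟩
    have h3 := Real.add_one_le_exp ((Real.exp (cseq (k + 1) - 1) - 1) * z)
    have h4 := mul_le_mul_of_nonneg_left h2 hz0.le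
    linarith

/-- For every `k ≥ 1` and every `x ≥ 0`, `F k x ≥ 1 - e^{(c_k - 1)x}`, where `c₁ = 0` and
`c_{k+1} = e^{c_k - 1}`. -/
theorem stmt_4 :
    ∀ k : ℕ, 1 ≤ k → ∀ x : ℝ, 0 ≤ x → 1 - Real.exp ((cseq k - 1) * x) ≤ F k x := by
  intro k hk x _
  obtain ⟨k, rfl⟩ := Nat.exists_eq_add_of_le' hk
  unfold F
  split_ifs with hx0
  · simp [hx0]
  · refine sub_le_sub_left (Real.sSup_le ?_ (Real.exp_pos _).le) 1
    rintro t ⟨n, xs, -, hxs, hsum, rfl⟩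
    rw [← hsum]
    exact prod_one_sub_le_exp (fun w hw => (f_bounds k w hw).2) xs hxs
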